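/- Let G be a graph on n vertices with minimum cut size t ≥ 1. The number of distinct cuts (partitions of V into two nonempty parts) whose crossing-edge count is at most j·t is at most n^{2j}, for every real j ≥ 1. -/

import Mathlib

open Finset
open scoped Classical

/-- Edges of `G` crossing the partition `(A, Aᶜ)`. -/
noncomputable def cutEdges {V : Type*} [Fintype V] [DecidableEq V]
    (G : SimpleGraph V) (A : Finset V) : Finset (Sym2 V) :=
  G.edgeFinset.filter (fun e => ∃ u ∈ A, ∃ v ∈ Aᶜ, e = s(u, v))

/-- Number of ordered crossing pairs. -/
noncomputable def cutCount {V : Type*} [Fintype V] (G : SimpleGraph V) (A : Finset V) : ℕ :=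
  (Finset.univ.filter (fun p : V × V => G.Adj p.1 p.2 ∧ p.1 ∈ A ∧ p.2 ∉ A)).card

theorem cutCount_eq {V : Type*} [Fintype V] [DecidableEq V] (G : SimpleGraph V) (A : Finset V) :
    (cutEdges G A).card = cutCount G A := by
  symm
  unfold cutCount cutEdges
  refine Finset.card_bij (fun p _ => s(p.1, p.2)) ?_ ?_ ?_
  · rintro ⟨u, v⟩ h
    simp only [Finset.mem_filter, Finset.mem_univ, true_and] at h
    simp only [Finset.mem_filter, SimpleGraph.mem_edgeFinset, SimpleGraph.mem_edgeSet]
    exact ⟨h.1, u, h.2.1, v, by simpa using h.2.2, rfl⟩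
  · rintro ⟨u, v⟩ h ⟨u', v'⟩ h' e
    simp only [Finset.mem_filter, Finset.mem_univ, true_and] at h h'
    simp only [Sym2.eq_iff] at e
    rcases e with ⟨rfl, rfl⟩ | ⟨rfl, rfl⟩
    · rfl
    · exact absurd h.2.1 h'.2.2
  · intro e h
    simp only [Finset.mem_filter, SimpleGraph.mem_edgeFinset] at h
    obtain ⟨h1, u, hu, v, hv, rfl⟩ := h
    exact ⟨(u, v), by simp at hv h1 ⊢; exact ⟨h1, hu, hv⟩, rfl⟩

/-- Bound function. -/
noncomputable def hB (a : ℝ) (m r : ℕ) : ℝ :=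
  2 ^ m / (m + 1).factorial *
    (((r.descFactorial (m + 1) : ℕ) : ℝ) ^ (a - m) * ((r.descFactorial m : ℕ) : ℝ) ^ (m + 1 - a))

theorem hB_nonneg (a : ℝ) (m r : ℕ) : 0 ≤ hB a m r := by
  unfold hB; positivity

theorem hB_base (a : ℝ) (m : ℕ) : hB a m (m + 1) = 2 ^ m := by
  unfold hB
  have h1 : (m + 1).descFactorial (m + 1) = (m + 1).factorial := Nat.descFactorial_self _
  have h2 : (m + 1).descFactorial m = (m + 1).factorial := by
    have := Nat.descFactorial_succ (m + 1) m
    rw [h1] at this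
    simpa using this.symm
  have hp : (0 : ℝ) < ((m + 1).factorial : ℕ) := by exact_mod_cast Nat.factorial_pos _
  rw [h1, h2, ← Real.rpow_add hp]
  rw [show a - m + (m + 1 - a) = 1 by ring, Real.rpow_one]
  field_simp

theorem hB_step (a : ℝ) (m r : ℕ) (h1 : (m : ℝ) ≤ a) (h2 : a ≤ m + 1) (hr : m + 1 ≤ r) :
    (r + 1 : ℝ) * hB a m r ≤ hB a m (r + 1) * (r + 1 - a) := by
  obtain ⟨s, rfl⟩ := Nat.exists_eq_add_of_le hr
  have e1 := Nat.succ_descFactorial (m + 1 + s) (m + 1)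
  have e2 := Nat.succ_descFactorial (m + 1 + s) m
  rw [show m + 1 + s + 1 - (m + 1) = s + 1 by omega] at e1
  rw [show m + 1 + s + 1 - m = s + 2 by omega] at e2
  unfold hB
  set U := (m + 1 + s).descFactorial (m + 1)
  set W := (m + 1 + s).descFactorial m
  set U' := (m + 1 + s + 1).descFactorial (m + 1)
  set W' := (m + 1 + s + 1).descFactorial m
  have e1' : ((s : ℝ) + 1) * U' = (m + 1 + s + 1) * U := by exact_mod_cast e1
  have e2' : ((s : ℝ) + 2) * W' = (m + 1 + s + 1) * W := by exact_mod_cast e2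
  have am := Real.geom_mean_le_arith_mean2_weighted (w₁ := a - m) (w₂ := m + 1 - a)
    (p₁ := (s : ℝ) + 1) (p₂ := (s : ℝ) + 2) (by linarith) (by linarith) (by positivity)
    (by positivity) (by ring)
  have key : ((m : ℝ) + 1 + s + 1) * ((U : ℝ) ^ (a - m) * (W : ℝ) ^ (m + 1 - a)) =
      (((s : ℝ) + 1) ^ (a - m) * ((s : ℝ) + 2) ^ (m + 1 - a)) *
        ((U' : ℝ) ^ (a - m) * (W' : ℝ) ^ (m + 1 - a)) := by
    have hpos : (0 : ℝ) < (m : ℝ) + 1 + s + 1 := by positivity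
    calc _ = (((m : ℝ) + 1 + s + 1) ^ (a - m) * ((m : ℝ) + 1 + s + 1) ^ (m + 1 - a)) *
          ((U : ℝ) ^ (a - m) * (W : ℝ) ^ (m + 1 - a)) := by
            rw [← Real.rpow_add hpos, show a - m + (m + 1 - a) = 1 by ring, Real.rpow_one]
      _ = (((m : ℝ) + 1 + s + 1) * U) ^ (a - m) * (((m : ℝ) + 1 + s + 1) * W) ^ (m + 1 - a) := by
            rw [Real.mul_rpow (by positivity) (by positivity),
              Real.mul_rpow (by positivity) (by positivity)]; ring
      _ = _ := by
            rw [← e1', ← e2', Real.mul_rpow (by positivity) (by positivity),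
              Real.mul_rpow (by positivity) (by positivity)]; ring
  push_cast
  have hC : (0 : ℝ) ≤ 2 ^ m / (m + 1).factorial := by positivity
  have hX : (0 : ℝ) ≤ (U' : ℝ) ^ (a - m) * (W' : ℝ) ^ (m + 1 - a) := by positivity
  calc _ = 2 ^ m / ((m + 1).factorial : ℝ) *
        (((m : ℝ) + 1 + s + 1) * ((U : ℝ) ^ (a - m) * (W : ℝ) ^ (m + 1 - a))) := by ring
    _ ≤ 2 ^ m / ((m + 1).factorial : ℝ) *
        (((m : ℝ) + 1 + s + 1 - a) * ((U' : ℝ) ^ (a - m) * (W' : ℝ) ^ (m + 1 - a))) := by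
        rw [key]
        refine mul_le_mul_of_nonneg_left (mul_le_mul_of_nonneg_right ?_ hX) hC
        linarith
    _ = _ := by ring

theorem hB_le (a : ℝ) (m r : ℕ) (h1 : (m : ℝ) ≤ a) (h2 : a ≤ m + 1) (hr : 0 < r) :
    hB a m r ≤ (r : ℝ) ^ a := by
  unfold hB
  have hr' : (0 : ℝ) < r := by exact_mod_cast hr
  have hf : (2 : ℝ) ^ m / (m + 1).factorial ≤ 1 := by
    rw [div_le_one (by positivity)]
    have : 2 ^ m ≤ (m + 1).factorial := by
      induction m with
      | zero => simp
      | succ m ih => 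
        clear ih h1 h2
        have := Nat.factorial_mul_pow_le_factorial (m := 1) (n := m + 1)
        simp at this
        rw [add_comm 1] at this
        exact this
    exact_mod_cast this
  have b1 : ((r.descFactorial (m + 1) : ℕ) : ℝ) ≤ (r : ℝ) ^ (m + 1) := by
    exact_mod_cast Nat.descFactorial_le_pow r (m + 1)
  have b2 : ((r.descFactorial m : ℕ) : ℝ) ≤ (r : ℝ) ^ m := by
    exact_mod_cast Nat.descFactorial_le_pow r m
  calc _ ≤ 1 * (((r : ℝ) ^ (m + 1)) ^ (a - m) * ((r : ℝ) ^ m) ^ (m + 1 - a)) := by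
        have := Real.rpow_le_rpow (by positivity) b1 (show 0 ≤ a - m by linarith)
        have := Real.rpow_le_rpow (by positivity) b2 (show 0 ≤ m + 1 - a by linarith)
        gcongr
    _ = _ := by
        rw [one_mul, ← Real.rpow_natCast, ← Real.rpow_natCast, ← Real.rpow_mul hr'.le,
          ← Real.rpow_mul hr'.le, ← Real.rpow_add hr']
        congr 1
        push_cast
        ring

/-- Saturated small cuts. -/
noncomputable def satCuts {V : Type*} [Fintype V] (G : SimpleGraph V) (v₀ : V) (b : ℝ)
    (f : V → V) : Finset (Finset V) :=
  Finset.univ.filter (fun A => v₀ ∈ A ∧ A ≠ Finset.univ ∧ 2 * (cutCount G A : ℝ) ≤ b ∧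
    ∀ x y, f x = f y → (x ∈ A ↔ y ∈ A))

theorem satCuts_le_two_pow {V : Type*} [Fintype V] (G : SimpleGraph V) (v₀ : V) (b : ℝ)
    (f : V → V) : (satCuts G v₀ b f).card ≤ 2 ^ ((Finset.univ.image f).card - 1) := by
  have hc : ((Finset.univ.image f).erase (f v₀)).powerset.card =
      2 ^ ((Finset.univ.image f).card - 1) := by
    rw [Finset.card_powerset, Finset.card_erase_of_mem (by simp)]
  rw [← hc]
  refine Finset.card_le_card_of_injOn (fun A => (A.image f).erase (f v₀)) ?_ ?_
  · intro A _
    simp only [Finset.coe_powerset, Set.mem_preimage, Set.mem_powerset_iff, Finset.coe_subset]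
    exact Finset.erase_subset_erase _ (Finset.image_subset_image (Finset.subset_univ _))
  · intro A hA B hB h
    simp only [satCuts, Finset.coe_filter, Finset.mem_univ, true_and, Set.mem_ofPred_eq] at hA hB
    have hi : A.image f = B.image f := by
      have h' := congrArg (insert (f v₀)) h
      simp only at h'
      rwa [Finset.insert_erase (Finset.mem_image_of_mem f hA.1),
        Finset.insert_erase (Finset.mem_image_of_mem f hB.1)] at h'
    ext x
    constructor
    · intro hx
      have : f x ∈ B.image f := hi ▸ Finset.mem_image_of_mem f hx
      obtain ⟨y, hy, e⟩ := Finset.mem_image.1 this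
      exact (hB.2.2.2 y x e).1 hy
    · intro hx
      have : f x ∈ A.image f := hi ▸ Finset.mem_image_of_mem f hx
      obtain ⟨y, hy, e⟩ := Finset.mem_image.1 this
      exact (hA.2.2.2 y x e).1 hy

/-- Ordered pairs of adjacent vertices in distinct classes. -/
noncomputable def crossPairs {V : Type*} [Fintype V] (G : SimpleGraph V) (f : V → V) :
    Finset (V × V) :=
  Finset.univ.filter (fun p => G.Adj p.1 p.2 ∧ f p.1 ≠ f p.2)

theorem crossPairs_card_ge {V : Type*} [Fintype V] (G : SimpleGraph V) (t : ℕ)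
    (hmin : ∀ A : Finset V, A.Nonempty → A ≠ Finset.univ → t ≤ cutCount G A)
    (f : V → V) (h2 : 2 ≤ (Finset.univ.image f).card) :
    (Finset.univ.image f).card * t ≤ (crossPairs G f).card := by
  rw [Finset.card_eq_sum_card_fiberwise (f := fun p : V × V => f p.1) (t := Finset.univ.image f)
    (fun p _ => by simp)]
  rw [← smul_eq_mul]
  refine Finset.card_nsmul_le_sum _ _ _ ?_
  intro c hc
  obtain ⟨x, -, rfl⟩ := Finset.mem_image.1 hc
  have := hmin (Finset.univ.filter (fun y => f y = f x)) ⟨x, by simp⟩ ?_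
  · refine this.trans (Finset.card_le_card ?_)
    rintro ⟨u, v⟩ h
    simp only [Finset.mem_filter, Finset.mem_univ, true_and, crossPairs] at h ⊢
    exact ⟨⟨h.1, fun e => h.2.2 (e ▸ h.2.1)⟩, h.2.1⟩
  · intro h
    obtain ⟨d, hd, hne⟩ := Finset.exists_mem_ne (s := Finset.univ.image f) (by omega) (f x)
    obtain ⟨y, -, rfl⟩ := Finset.mem_image.1 hd
    have : y ∈ Finset.univ.filter (fun y => f y = f x) := by rw [h]; simp
    simp at this
    exact hne this

/-- Merge the class of `v` into that of `u`. -/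
noncomputable def mergeMap {V : Type*} (f : V → V) (u v : V) : V → V :=
  fun x => if f x = f v then f u else f x

theorem mergeMap_image {V : Type*} [Fintype V] (f : V → V) (u v : V) (h : f u ≠ f v) :
    (Finset.univ.image (mergeMap f u v)).card + 1 = (Finset.univ.image f).card := by
  have : Finset.univ.image (mergeMap f u v) = (Finset.univ.image f).erase (f v) := by
    ext c
    simp only [Finset.mem_image, Finset.mem_univ, true_and, Finset.mem_erase, mergeMap]
    constructor
    · rintro ⟨x, rfl⟩
      split_ifs with hx
      · exact ⟨h, u, rfl⟩
      · exact ⟨hx, x, rfl⟩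
    · rintro ⟨hc, x, rfl⟩
      exact ⟨x, by rw [if_neg hc]⟩
  rw [this]
  exact Finset.card_erase_add_one (by simp)

theorem satCuts_merge {V : Type*} [Fintype V] (G : SimpleGraph V) (v₀ : V) (b : ℝ)
    (f : V → V) (u v : V) :
    (satCuts G v₀ b f).filter (fun A => (u ∈ A ↔ v ∈ A)) ⊆ satCuts G v₀ b (mergeMap f u v) := by
  intro A h
  simp only [satCuts, Finset.mem_filter, Finset.mem_univ, true_and] at h
  obtain ⟨⟨h1, h2, h3, h4⟩, h5⟩ := h
  refine Finset.mem_filter.2 ⟨Finset.mem_univ _, h1, h2, h3, ?_⟩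
  intro x y e
  simp only [mergeMap] at e
  split_ifs at e with hx hy hy
  · exact h4 _ _ (hx.trans hy.symm)
  · rw [h4 _ _ hx, ← h5, h4 _ _ e]
  · rw [h4 _ _ e, h5, h4 _ _ hy]
  · exact h4 _ _ e

theorem survive_count {V : Type*} [Fintype V] (G : SimpleGraph V) (v₀ : V) (b : ℝ)
    (f : V → V) (A : Finset V) (hA : A ∈ satCuts G v₀ b f) :
    ((crossPairs G f).card : ℝ) - b ≤
      ((crossPairs G f).filter (fun p => (p.1 ∈ A ↔ p.2 ∈ A))).card := by
  simp only [satCuts, Finset.mem_filter, Finset.mem_univ, true_and] at hA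
  have h1 := Finset.card_filter_add_card_filter_not (s := crossPairs G f)
    (fun p => (p.1 ∈ A ↔ p.2 ∈ A))
  have h2 : ((crossPairs G f).filter (fun p => ¬ (p.1 ∈ A ↔ p.2 ∈ A))).card ≤
      cutCount G A + cutCount G A := by
    have hs : (crossPairs G f).filter (fun p => ¬ (p.1 ∈ A ↔ p.2 ∈ A)) ⊆
        (Finset.univ.filter (fun p : V × V => G.Adj p.1 p.2 ∧ p.1 ∈ A ∧ p.2 ∉ A)) ∪
        (Finset.univ.filter (fun p : V × V => G.Adj p.1 p.2 ∧ p.1 ∈ A ∧ p.2 ∉ A)).image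
          Prod.swap := by
      rintro ⟨u, v⟩ h
      simp only [crossPairs, Finset.mem_filter, Finset.mem_univ, true_and] at h
      simp only [Finset.mem_union, Finset.mem_image, Finset.mem_filter, Finset.mem_univ, true_and]
      by_cases hu : u ∈ A
      · left; exact ⟨h.1.1, hu, by tauto⟩
      · right; exact ⟨(v, u), ⟨h.1.1.symm, by tauto, hu⟩, rfl⟩
    refine (Finset.card_le_card hs).trans ((Finset.card_union_le _ _).trans ?_)
    exact Nat.add_le_add le_rfl Finset.card_image_le
  have h1' : (((crossPairs G f).filter (fun p => (p.1 ∈ A ↔ p.2 ∈ A))).card : ℝ) +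
      ((crossPairs G f).filter (fun p => ¬ (p.1 ∈ A ↔ p.2 ∈ A))).card = (crossPairs G f).card := by
    exact_mod_cast h1
  have h2' : (((crossPairs G f).filter (fun p => ¬ (p.1 ∈ A ↔ p.2 ∈ A))).card : ℝ) ≤
      cutCount G A + cutCount G A := by exact_mod_cast h2
  linarith [hA.2.2.1]

theorem satCuts_le_hB {V : Type*} [Fintype V] (G : SimpleGraph V) (t : ℕ) (ht : 1 ≤ t)
    (hmin : ∀ A : Finset V, A.Nonempty → A ≠ Finset.univ → t ≤ cutCount G A)
    (v₀ : V) (a : ℝ) (m : ℕ) (hm : 1 ≤ m) (h1 : (m : ℝ) ≤ a) (h2 : a ≤ m + 1) (s : ℕ) :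
    ∀ f : V → V, (Finset.univ.image f).card = m + 1 + s →
      ((satCuts G v₀ (a * t) f).card : ℝ) ≤ hB a m (m + 1 + s) := by
  induction s with
  | zero =>
    intro f hf
    have := satCuts_le_two_pow G v₀ (a * t) f
    rw [hf] at this
    simp only [add_zero, Nat.add_sub_cancel] at this ⊢
    rw [hB_base]
    exact_mod_cast this
  | succ s ih =>
    intro f hf
    have hM := crossPairs_card_ge G t hmin f (by omega)
    rw [hf] at hM
    have hM' : ((m : ℝ) + 1 + s + 1) * t ≤ (crossPairs G f).card := by
      exact_mod_cast hM
    set M : ℝ := ((crossPairs G f).card : ℝ) with hMdef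
    set N : ℝ := ((satCuts G v₀ (a * t) f).card : ℝ) with hNdef
    have upper : ∑ p ∈ crossPairs G f,
        (((satCuts G v₀ (a * t) f).filter (fun A => (p.1 ∈ A ↔ p.2 ∈ A))).card : ℝ) ≤
        M * hB a m (m + 1 + s) := by
      rw [hMdef, ← nsmul_eq_mul]
      refine Finset.sum_le_card_nsmul _ _ _ ?_
      intro p hp
      simp only [crossPairs, Finset.mem_filter, Finset.mem_univ, true_and] at hp
      have hi := mergeMap_image f p.1 p.2 hp.2
      refine le_trans ?_ (ih (mergeMap f p.1 p.2) (by omega))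
      exact_mod_cast Finset.card_le_card (satCuts_merge G v₀ (a * t) f p.1 p.2)
    have lower : N * (M - a * t) ≤ ∑ A ∈ satCuts G v₀ (a * t) f,
        (((crossPairs G f).filter (fun p => (p.1 ∈ A ↔ p.2 ∈ A))).card : ℝ) := by
      rw [hNdef, ← nsmul_eq_mul]
      exact Finset.card_nsmul_le_sum _ _ _ (fun A hA => survive_count G v₀ (a * t) f A hA)
    have swap : ∑ A ∈ satCuts G v₀ (a * t) f,
        (((crossPairs G f).filter (fun p => (p.1 ∈ A ↔ p.2 ∈ A))).card : ℝ) =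
        ∑ p ∈ crossPairs G f,
        (((satCuts G v₀ (a * t) f).filter (fun A => (p.1 ∈ A ↔ p.2 ∈ A))).card : ℝ) := by
      simp only [Finset.card_filter, Nat.cast_sum]
      exact Finset.sum_comm
    have main : N * (M - a * t) ≤ M * hB a m (m + 1 + s) := by linarith
    have step := hB_step a m (m + 1 + s) h1 h2 (by omega)
    push_cast at step
    have ht' : (1 : ℝ) ≤ t := by exact_mod_cast ht
    have hs0 : (0 : ℝ) ≤ s := by positivity
    have hR : (0 : ℝ) < (m : ℝ) + 1 + s + 1 := by positivity
    have hRa : (0 : ℝ) < (m : ℝ) + 1 + s + 1 - a := by linarith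
    have ha : 0 ≤ a := le_trans (by positivity) h1
    have hpos : 0 < M - a * t := by nlinarith
    have hH := hB_nonneg a m (m + 1 + s + 1)
    show N ≤ hB a m (m + 1 + s + 1)
    -- M * R * h ≤ M * (R - a) * H ≤ R * (M - a t) * H
    have s1 : M * (((m : ℝ) + 1 + s + 1) * hB a m (m + 1 + s)) ≤
        M * (hB a m (m + 1 + s + 1) * ((m : ℝ) + 1 + s + 1 - a)) :=
      mul_le_mul_of_nonneg_left step (by positivity)
    have s2 : M * ((m : ℝ) + 1 + s + 1 - a) ≤ ((m : ℝ) + 1 + s + 1) * (M - a * t) := by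
      nlinarith [mul_le_mul_of_nonneg_left hM' ha]
    have s3 := mul_le_mul_of_nonneg_left s2 hH
    have s4 := mul_le_mul_of_nonneg_left main hR.le
    have s5 : (((m : ℝ) + 1 + s + 1) * (M - a * t)) * N ≤
        (((m : ℝ) + 1 + s + 1) * (M - a * t)) * hB a m (m + 1 + s + 1) := by linarith
    exact le_of_mul_le_mul_left s5 (mul_pos hR hpos)

/-- Karger's cut-counting bound: in a connected graph on `n` vertices with minimum
cut size `t ≥ 1`, the number of distinct cuts (partitions of `V` into two nonempty
parts, here represented by the part containing a fixed vertex `v₀`) whose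
crossing-edge count is at most `j·t` is at most `n^(2j)`, for every real `j ≥ 1`. -/
theorem stmt5 {V : Type*} [Fintype V] [DecidableEq V] (G : SimpleGraph V)
    (hG : G.Connected) (t : ℕ) (ht : 1 ≤ t)
    (hmin : ∀ A : Finset V, A.Nonempty → A ≠ Finset.univ → t ≤ (cutEdges G A).card)
    (hex : ∃ A : Finset V, A.Nonempty ∧ A ≠ Finset.univ ∧ (cutEdges G A).card = t)
    (v₀ : V) (j : ℝ) (hj : 1 ≤ j) :
    (((Finset.univ.powerset.filter (fun A : Finset V =>
        v₀ ∈ A ∧ A ≠ Finset.univ ∧ ((cutEdges G A).card : ℝ) ≤ j * t)).card : ℝ))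
      ≤ (Fintype.card V : ℝ) ^ (2 * j) := by
  have hmin' : ∀ A : Finset V, A.Nonempty → A ≠ Finset.univ → t ≤ cutCount G A := by
    intro A h1 h2
    rw [← cutCount_eq]
    exact hmin A h1 h2
  have hle : (Finset.univ.powerset.filter (fun A : Finset V =>
        v₀ ∈ A ∧ A ≠ Finset.univ ∧ ((cutEdges G A).card : ℝ) ≤ j * t)).card ≤
      (satCuts G v₀ (2 * j * t) id).card := by
    refine Finset.card_le_card ?_
    intro A h
    simp only [satCuts, Finset.mem_filter, Finset.mem_univ, true_and] at h ⊢
    obtain ⟨-, h1, h2, h3⟩ := h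
    rw [cutCount_eq] at h3
    refine ⟨h1, h2, by linarith, ?_⟩
    rintro x y rfl
    rfl
  refine le_trans (Nat.cast_le.2 hle) ?_
  have hn : 0 < Fintype.card V := Fintype.card_pos_iff.2 ⟨v₀⟩
  have himg : (Finset.univ.image (id : V → V)).card = Fintype.card V := by
    rw [Finset.image_id, Finset.card_univ]
  obtain ⟨m, hm⟩ : ∃ m, m = ⌊2 * j⌋₊ := ⟨_, rfl⟩
  have h1 : (m : ℝ) ≤ 2 * j := by rw [hm]; exact Nat.floor_le (by linarith)
  have h2 : 2 * j ≤ m + 1 := by rw [hm]; exact (Nat.lt_floor_add_one _).le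
  have hm1 : 1 ≤ m := by
    rw [hm]; exact Nat.le_floor (by push_cast; linarith)
  rcases le_total (m + 1) (Fintype.card V) with hc | hc
  · obtain ⟨s, hs⟩ := Nat.exists_eq_add_of_le hc
    have := satCuts_le_hB G t ht hmin' v₀ (2 * j) m hm1 h1 h2 s id (by convert himg.trans hs)
    refine this.trans ?_
    rw [← hs]
    exact hB_le _ _ _ h1 h2 hn
  · have hp := satCuts_le_two_pow G v₀ (2 * j * t) id
    have hp' : (satCuts G v₀ (2 * j * t) id).card ≤ 2 ^ (Fintype.card V - 1) := by
      rw [← himg]; convert hp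
    have hq : 2 ^ (Fintype.card V - 1) ≤ Fintype.card V ^ (Fintype.card V - 1) := by
      rcases Nat.lt_or_ge (Fintype.card V) 2 with h | h
      · rw [show Fintype.card V = 1 by omega]; norm_num
      · exact Nat.pow_le_pow_left h _
    have hn1 : (1 : ℝ) ≤ Fintype.card V := by exact_mod_cast hn
    calc ((satCuts G v₀ (2 * j * t) id).card : ℝ)
        ≤ (Fintype.card V : ℝ) ^ (Fintype.card V - 1) := by exact_mod_cast hp'.trans hq
      _ = (Fintype.card V : ℝ) ^ ((Fintype.card V - 1 : ℕ) : ℝ) := (Real.rpow_natCast _ _).symm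
      _ ≤ _ := by
        refine Real.rpow_le_rpow_of_exponent_le hn1 (le_trans ?_ h1)
        exact_mod_cast (by omega : Fintype.card V - 1 ≤ m)
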